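/- Let a > 0, B ≥ a, and let c_1, …, c_n be real numbers. If for every s ∈ {1,…,n} one has ∑_{r=1}^{s} c_r·1{c_r < a} ≤ B − a, then accepting the first arrival is optimal for the sequence (a, c_1, …, c_n) with initial budget B, that is, V(B; a, c_1, …, c_n) = 1 + V(B − a; c_1, …, c_n). -/

import Mathlib

/-!
The inequality `≥` holds because prepending the arrival of cost `a` to a selection feasible for
`B - a` gives one feasible for `B`. For `≤`, take an optimal selection for the extended sequence.
If it accepts the first arrival, dropping that arrival leaves a selection feasible for `B - a`.
Otherwise it gives a selection `S` of `c` feasible for `B`, and it suffices to lose at most one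
acceptance while gaining `a` units of budget (`exists_feasible_sub`). Adding every arrival of
negative cost to `S` keeps it feasible. Now delete the first accepted arrival `j` with cost at
least `a`, if there is one. From `j` on, the spending falls by at least `a`. Before `j`, only costs
below `a` are accepted and only nonnegative ones are rejected, so the spending is at most the sum of
all the costs below `a`, which is at most `B - a` by hypothesis.
-/

/-- Hindsight-optimal number of acceptances among `c 0, …, c (n-1)` under any-time
budget constraints with initial budget `B`. -/
noncomputable def valB (B : ℝ) (n : ℕ) (c : ℕ → ℝ) : ℕ :=
  sSup {k : ℕ | ∃ S : Finset ℕ, S ⊆ Finset.range n ∧ S.card = k ∧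
    ∀ t ∈ Finset.range n, ∑ i ∈ S.filter (fun i => i ≤ t), c i ≤ B}

/-- Feasibility of the selection `S` for the budget `B`, with the spending up to each time written
as a sum over an initial range, so that `Finset.sum_range_succ'` splits off the first arrival. -/
def Feasible (B : ℝ) (n : ℕ) (c : ℕ → ℝ) (S : Finset ℕ) : Prop :=
  S ⊆ Finset.range n ∧ ∀ t < n, ∑ i ∈ Finset.range (t + 1), (if i ∈ S then c i else 0) ≤ B

lemma feasible_iff (B : ℝ) (n : ℕ) (c : ℕ → ℝ) (S : Finset ℕ) :
    Feasible B n c S ↔ S ⊆ Finset.range n ∧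
      ∀ t ∈ Finset.range n, ∑ i ∈ S.filter (fun i => i ≤ t), c i ≤ B := by
  have key : ∀ t, ∑ i ∈ Finset.range (t + 1), (if i ∈ S then c i else 0)
      = ∑ i ∈ S.filter (fun i => i ≤ t), c i := by
    intro t
    rw [← Finset.sum_filter]
    congr 1
    ext i
    simp only [Finset.mem_filter, Finset.mem_range, Nat.lt_succ_iff, and_comm]
  simp only [Feasible, key, Finset.mem_range]

lemma valB_bddAbove (B : ℝ) (n : ℕ) (c : ℕ → ℝ) :
    BddAbove {k : ℕ | ∃ S : Finset ℕ, S ⊆ Finset.range n ∧ S.card = k ∧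
      ∀ t ∈ Finset.range n, ∑ i ∈ S.filter (fun i => i ≤ t), c i ≤ B} := by
  refine ⟨n, ?_⟩
  rintro k ⟨S, hS, rfl, -⟩
  simpa using Finset.card_le_card hS

lemma Feasible.card_le_valB {B : ℝ} {n : ℕ} {c : ℕ → ℝ} {S : Finset ℕ}
    (hS : Feasible B n c S) : S.card ≤ valB B n c := by
  rw [feasible_iff] at hS
  exact le_csSup (valB_bddAbove B n c) ⟨S, hS.1, rfl, hS.2⟩

/-- For a nonnegative budget the supremum defining `valB` is attained, since the empty selection is
feasible. -/
lemma exists_feasible_card_eq_valB {B : ℝ} (hB : 0 ≤ B) (n : ℕ) (c : ℕ → ℝ) :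
    ∃ S, Feasible B n c S ∧ S.card = valB B n c := by
  obtain ⟨S, h1, h2, h3⟩ :=
    Nat.sSup_mem (s := {k : ℕ | ∃ S : Finset ℕ, S ⊆ Finset.range n ∧ S.card = k ∧
      ∀ t ∈ Finset.range n, ∑ i ∈ S.filter (fun i => i ≤ t), c i ≤ B})
      ⟨0, ∅, by simp, by simp, by simpa using fun _ _ => hB⟩ (valB_bddAbove B n c)
  exact ⟨S, (feasible_iff B n c S).2 ⟨h1, h3⟩, h2⟩

lemma card_eq_sum_range {n : ℕ} {S : Finset ℕ} (hS : S ⊆ Finset.range n) :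
    S.card = ∑ i ∈ Finset.range n, (if i ∈ S then 1 else 0) := by
  rw [← Finset.sum_filter, Finset.filter_mem_eq_inter, Finset.inter_eq_right.2 hS,
    Finset.card_eq_sum_ones]

/-- The exchange argument: under the hypothesis on the costs below `a`, giving up at most one
acceptance saves `a` units of budget at every time. -/
lemma exists_feasible_sub {a B : ℝ} {n : ℕ} {c : ℕ → ℝ}
    (h : ∀ s < n, ∑ r ∈ Finset.range (s + 1), (if c r < a then c r else 0) ≤ B - a)
    {S : Finset ℕ} (hS : Feasible B n c S) :
    ∃ T, Feasible (B - a) n c T ∧ S.card ≤ T.card + 1 := by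
  classical
  set S₁ := S ∪ (Finset.range n).filter (fun i => c i < 0) with hS₁
  have hsub : S₁ ⊆ Finset.range n := Finset.union_subset hS.1 (Finset.filter_subset _ _)
  have hcard : S.card ≤ S₁.card := Finset.card_le_card Finset.subset_union_left
  have hmem : ∀ i < n, (i ∈ S₁ ↔ i ∈ S ∨ c i < 0) := by
    intro i hi
    simp [hS₁, hi]
  have hfeas : ∀ t < n, ∑ i ∈ Finset.range (t + 1), (if i ∈ S₁ then c i else 0) ≤ B := by
    intro t ht
    refine le_trans (Finset.sum_le_sum fun i hi => ?_) (hS.2 t ht)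
    have hin : i < n := by have := Finset.mem_range.1 hi; omega
    have := hmem i hin
    grind
  have hcheap : ∀ t < n, (∀ i ≤ t, i ∈ S₁ → c i < a) →
      ∑ i ∈ Finset.range (t + 1), (if i ∈ S₁ then c i else 0) ≤ B - a := by
    intro t ht hlt
    refine le_trans (Finset.sum_le_sum fun i hi => ?_) (h t ht)
    have hit : i ≤ t := by have := Finset.mem_range.1 hi; omega
    have h1 := hlt i hit
    have h2 := hmem i (by omega)
    grind
  by_cases hex : ∃ j, j ∈ S₁ ∧ a ≤ c j
  · obtain ⟨hj, hja⟩ := Nat.find_spec hex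
    have hmin : ∀ i < Nat.find hex, i ∈ S₁ → c i < a := by
      intro i hi hiS
      by_contra hc
      exact Nat.find_min hex hi ⟨hiS, not_lt.1 hc⟩
    generalize Nat.find hex = j at hj hja hmin
    refine ⟨S₁.erase j, ⟨(Finset.erase_subset _ _).trans hsub, fun t ht => ?_⟩, ?_⟩
    · have heq : ∑ i ∈ Finset.range (t + 1), (if i ∈ S₁.erase j then c i else 0)
          = ∑ i ∈ Finset.range (t + 1), (if i ∈ S₁ then c i else 0)
            - ∑ i ∈ Finset.range (t + 1), (if i = j then c i else 0) := by
        rw [← Finset.sum_sub_distrib]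
        refine Finset.sum_congr rfl fun i _ => ?_
        by_cases hij : i = j
        · subst hij; simp [hj]
        · simp [hij]
      rw [heq, Finset.sum_ite_eq']
      by_cases hjt : j ≤ t
      · rw [if_pos (Finset.mem_range.2 (by omega))]
        linarith [hfeas t ht]
      · rw [if_neg (by simp; omega), sub_zero]
        exact hcheap t ht fun i hi => hmin i (by omega)
    · rwa [Finset.card_erase_add_one hj]
  · push Not at hex
    exact ⟨S₁, ⟨hsub, fun t ht => hcheap t ht fun i _ => hex i⟩, by omega⟩

theorem stmt8 (a B : ℝ) (ha : 0 < a) (hB : a ≤ B) (n : ℕ) (c : ℕ → ℝ)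
    (h : ∀ s ∈ Finset.range n,
      ∑ r ∈ Finset.range (s + 1), (if c r < a then c r else 0) ≤ B - a) :
    valB B (n + 1) (fun i => if i = 0 then a else c (i - 1)) = 1 + valB (B - a) n c := by
  classical
  apply le_antisymm
  · obtain ⟨S, hS, hSc⟩ := exists_feasible_card_eq_valB (ha.le.trans hB) (n + 1)
      (fun i => if i = 0 then a else c (i - 1))
    rw [← hSc]
    -- `S₀` is `S` restricted to the arrivals of `c`, reindexed from `0`.
    set S₀ := (Finset.range n).filter (fun i => i + 1 ∈ S) with hS₀
    have hsub : S₀ ⊆ Finset.range n := Finset.filter_subset _ _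
    have hmem : ∀ i < n, (i ∈ S₀ ↔ i + 1 ∈ S) := fun i hi => by simp [hS₀, hi]
    have hcard : S.card = S₀.card + if 0 ∈ S then 1 else 0 := by
      rw [card_eq_sum_range hS.1, card_eq_sum_range hsub, Finset.sum_range_succ']
      congr 1
      exact Finset.sum_congr rfl fun i hi => by
        simp only [hmem i (Finset.mem_range.1 hi)]
    have hsum : ∀ t < n, ∑ i ∈ Finset.range (t + 1), (if i ∈ S₀ then c i else 0)
        + (if 0 ∈ S then a else 0) ≤ B := by
      intro t ht
      have := hS.2 (t + 1) (by omega)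
      rw [Finset.sum_range_succ'] at this
      refine le_trans (le_of_eq ?_) this
      congr 1
      refine Finset.sum_congr rfl fun i hi => ?_
      simp [hmem i (by have := Finset.mem_range.1 hi; omega)]
    by_cases h0 : 0 ∈ S
    · simp only [h0, if_true] at hcard hsum
      have hf : Feasible (B - a) n c S₀ := ⟨hsub, fun t ht => by linarith [hsum t ht]⟩
      have := hf.card_le_valB
      omega
    · simp only [h0, if_false, add_zero] at hcard hsum
      obtain ⟨T, hT, hle⟩ := exists_feasible_sub
        (fun s hs => h s (Finset.mem_range.2 hs)) (S := S₀) ⟨hsub, hsum⟩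
      have := hT.card_le_valB
      omega
  · obtain ⟨S, hS, hSc⟩ := exists_feasible_card_eq_valB (sub_nonneg.2 hB) n c
    have hf : Feasible B (n + 1) (fun i => if i = 0 then a else c (i - 1))
        (insert 0 (S.image Nat.succ)) := by
      refine ⟨fun i hi => ?_, fun t ht => ?_⟩
      · rcases Finset.mem_insert.1 hi with rfl | hi
        · simp
        · obtain ⟨k, hk, rfl⟩ := Finset.mem_image.1 hi
          have := Finset.mem_range.1 (hS.1 hk)
          exact Finset.mem_range.2 (by omega)
      · rw [Finset.sum_range_succ']
        cases t with
        | zero => simpa using hB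
        | succ t =>
          have := hS.2 t (by omega)
          simp [-Finset.sum_ite_mem]
          linarith
    have := hf.card_le_valB
    rw [Finset.card_insert_of_notMem (by simp),
      Finset.card_image_of_injective _ Nat.succ_injective] at this
    omega
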